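/- arXiv:1001.4940 — 5 statements merged into one kernel-verified Lean document; each statement's English description precedes it below -/
import Mathlib

section
/- Let f, h : ℝ → ℝ be infinitely differentiable functions. Suppose that for all j, k ∈ ℕ the symmetry relation (d/dx)^j(h·f)(0) · (d/dx)^k f(0) = (d/dx)^k(h·f)(0) · (d/dx)^j f(0) holds (this is the statement that ∂_x^j ∂_y^k (h(x)f(x)f(y)) and ∂_x^k ∂_y^j (h(x)f(x)f(y)) agree at (x,y) = (0,0)). Then either the j-th derivative of f at 0 vanishes for every j ∈ ℕ (including j = 0), or the k-th derivative of h at 0 vanishes for every integer k ≥ 1. -/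
/-!
The symmetry relation says that the coefficients of the Taylor series of `h * f` and of `f` are
proportional. Since `T (h * f) = T h * T f` for Taylor series `T`, a nonzero `T f` yields scalars
`a ≠ 0` and `b` with `(a * T h - b) * T f = 0`. Formal power series over a field have no zero
divisors, so `a * T h` is the constant series `b`.
-/

open Finset
open PowerSeries (C coeff)
open scoped Nat ContDiff PowerSeries

section PowerSeries

variable {R : Type*} [CommRing R] [NoZeroDivisors R] {F H : R⟦X⟧}

theorem coeff_eq_zero_of_C_mul_mul_eq_C_mul {a b : R} (ha : a ≠ 0) (hF : F ≠ 0)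
    (h : C a * (H * F) = C b * F) {k : ℕ} (hk : k ≠ 0) : coeff k H = 0 := by
  have h_const : C a * H = C b := mul_right_cancel₀ hF (by rw [mul_assoc, h])
  have h_coeff : a * coeff k H = 0 := by
    rw [← PowerSeries.coeff_C_mul, h_const, PowerSeries.coeff_C_of_ne_zero hk]
  exact (mul_eq_zero.mp h_coeff).resolve_left ha

theorem eq_zero_or_coeff_eq_zero_of_coeff_cross_mul_eq
    (h : ∀ j k : ℕ, coeff j (H * F) * coeff k F = coeff k (H * F) * coeff j F) :
    F = 0 ∨ ∀ k : ℕ, k ≠ 0 → coeff k H = 0 := by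
  refine or_iff_not_imp_left.mpr fun hF k hk ↦ ?_
  obtain ⟨m, hm⟩ := PowerSeries.exists_coeff_ne_zero_iff_ne_zero.mpr hF
  refine coeff_eq_zero_of_C_mul_mul_eq_C_mul hm hF (b := coeff m (H * F)) ?_ hk
  ext j
  rw [PowerSeries.coeff_C_mul, PowerSeries.coeff_C_mul, mul_comm, h j m]

end PowerSeries

section TaylorSeries

variable {𝕜 K : Type*} [NontriviallyNormedField 𝕜] [NormedField K] [NormedAlgebra 𝕜 K]

/-- The formal Taylor series of `f` at `x`: the power series whose `n`-th coefficient is the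
`n`-th derivative of `f` at `x` divided by `n!`, with no convergence claim. It turns the Leibniz
rule into multiplicativity. -/
noncomputable def formalTaylorSeries (f : 𝕜 → K) (x : 𝕜) : K⟦X⟧ :=
  PowerSeries.mk fun n ↦ iteratedDeriv n f x / n !

variable {f h : 𝕜 → K} {x : 𝕜}

theorem coeff_formalTaylorSeries (n : ℕ) :
    coeff n (formalTaylorSeries f x) = iteratedDeriv n f x / n ! :=
  PowerSeries.coeff_mk n _

variable [CharZero K]

theorem coeff_formalTaylorSeries_eq_zero_iff {n : ℕ} :
    coeff n (formalTaylorSeries f x) = 0 ↔ iteratedDeriv n f x = 0 := by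
  simp [coeff_formalTaylorSeries, Nat.factorial_ne_zero]

theorem formalTaylorSeries_eq_zero_iff :
    formalTaylorSeries f x = 0 ↔ ∀ n : ℕ, iteratedDeriv n f x = 0 := by
  simp only [PowerSeries.ext_iff, map_zero, coeff_formalTaylorSeries_eq_zero_iff]

theorem formalTaylorSeries_mul (hh : ContDiffAt 𝕜 ∞ h x) (hf : ContDiffAt 𝕜 ∞ f x) :
    formalTaylorSeries (h * f) x = formalTaylorSeries h x * formalTaylorSeries f x := by
  ext n
  have hn : (n : WithTop ℕ∞) ≤ ∞ := mod_cast le_top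
  rw [coeff_formalTaylorSeries, iteratedDeriv_mul (hh.of_le hn) (hf.of_le hn),
    PowerSeries.coeff_mul, Nat.sum_antidiagonal_eq_sum_range_succ_mk, sum_div]
  refine sum_congr rfl fun i hi ↦ ?_
  have hn_factorial : (n ! : K) ≠ 0 := Nat.cast_ne_zero.mpr n.factorial_ne_zero
  rw [coeff_formalTaylorSeries, coeff_formalTaylorSeries,
    Nat.cast_choose K (mem_range_succ_iff.mp hi)]
  field_simp

theorem stmt_0_general (hf : ContDiffAt 𝕜 ∞ f x) (hh : ContDiffAt 𝕜 ∞ h x)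
    (hsym : ∀ j k : ℕ, iteratedDeriv j (h * f) x * iteratedDeriv k f x =
      iteratedDeriv k (h * f) x * iteratedDeriv j f x) :
    (∀ j : ℕ, iteratedDeriv j f x = 0) ∨ ∀ k : ℕ, k ≠ 0 → iteratedDeriv k h x = 0 := by
  simp only [← formalTaylorSeries_eq_zero_iff, ← coeff_formalTaylorSeries_eq_zero_iff (f := h)]
  refine eq_zero_or_coeff_eq_zero_of_coeff_cross_mul_eq fun j k ↦ ?_
  simp only [← formalTaylorSeries_mul hh hf, coeff_formalTaylorSeries, div_mul_div_comm, hsym j k,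
    mul_comm (j ! : K)]

end TaylorSeries

/-- If `f, h : ℝ → ℝ` are smooth and for all `j k : ℕ` the symmetry
relation `(h·f)⁽ʲ⁾(0) · f⁽ᵏ⁾(0) = (h·f)⁽ᵏ⁾(0) · f⁽ʲ⁾(0)` holds, then either all
derivatives of `f` at `0` vanish, or all derivatives of `h` of order `≥ 1` at `0` vanish. -/
theorem stmt_0 (f h : ℝ → ℝ) (hf : ContDiff ℝ (⊤ : ℕ∞) f) (hh : ContDiff ℝ (⊤ : ℕ∞) h)
    (hsym : ∀ j k : ℕ,
      iteratedDeriv j (fun x => h x * f x) 0 * iteratedDeriv k f 0 =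
        iteratedDeriv k (fun x => h x * f x) 0 * iteratedDeriv j f 0) :
    (∀ j : ℕ, iteratedDeriv j f 0 = 0) ∨ (∀ k : ℕ, 1 ≤ k → iteratedDeriv k h 0 = 0) := by
  simpa only [Nat.one_le_iff_ne_zero] using
    stmt_0_general (x := 0) hf.contDiffAt hh.contDiffAt hsym
end

section
/- Let f, h : ℝ → ℝ be infinitely differentiable. Let j ∈ ℕ be the smallest natural number with (d/dx)^j f(0) ≠ 0 (in particular (d/dx)^m f(0) = 0 for all m < j), and let k ≥ 1 be the smallest positive integer with (d/dx)^k h(0) ≠ 0 (in particular (d/dx)^l h(0) = 0 for 1 ≤ l < k). Then (d/dx)^{j+k}(h·f)(0) · (d/dx)^j f(0) − (d/dx)^j(h·f)(0) · (d/dx)^{j+k} f(0) = C(j+k, k) · (d/dx)^k h(0) · ((d/dx)^j f(0))², where C(j+k, k) is the binomial coefficient; in particular this expression is nonzero. -/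
/-!
In the Leibniz expansion of `(h·f)⁽ʲ⁺ᵏ⁾` only the terms with `0` or `k` derivatives on `h` survive,
and in that of `(h·f)⁽ʲ⁾` only the term with none. The terms containing `h` itself cancel in the
difference.
-/

section NormedRing

variable {𝕜 𝔸 : Type*} [NontriviallyNormedField 𝕜] [NormedRing 𝔸] [NormedAlgebra 𝕜 𝔸]
  {f h : 𝕜 → 𝔸} {x : 𝕜} {j k : ℕ}

theorem iteratedDeriv_fun_mul_of_forall_lt_eq_zero
    (hh : ContDiffAt 𝕜 j h x) (hf : ContDiffAt 𝕜 j f x)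
    (hf_zero : ∀ m < j, iteratedDeriv m f x = 0) :
    iteratedDeriv j (fun y => h y * f y) x = h x * iteratedDeriv j f x := by
  rw [iteratedDeriv_fun_mul hh hf, Finset.sum_eq_single_of_mem 0 (by simp)]
  · simp
  · intro i hi hi_ne
    rw [Finset.mem_range] at hi
    rw [hf_zero (j - i) (by omega), mul_zero]

theorem iteratedDeriv_add_fun_mul_of_forall_lt_eq_zero (hk : 1 ≤ k)
    (hh : ContDiffAt 𝕜 (j + k : ℕ) h x) (hf : ContDiffAt 𝕜 (j + k : ℕ) f x)
    (hf_zero : ∀ m < j, iteratedDeriv m f x = 0)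
    (hh_zero : ∀ l, 1 ≤ l → l < k → iteratedDeriv l h x = 0) :
    iteratedDeriv (j + k) (fun y => h y * f y) x =
      h x * iteratedDeriv (j + k) f x +
        (j + k).choose k * iteratedDeriv k h x * iteratedDeriv j f x := by
  have other_terms_zero : ∀ i ∈ Finset.range (j + k + 1), i ≠ 0 ∧ i ≠ k →
      (j + k).choose i * iteratedDeriv i h x * iteratedDeriv (j + k - i) f x = 0 := by
    rintro i hi ⟨hi_ne_zero, hi_ne_k⟩
    rw [Finset.mem_range] at hi
    rcases lt_or_gt_of_ne hi_ne_k with hik | hki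
    · rw [hh_zero i (by omega) hik, mul_zero, zero_mul]
    · rw [hf_zero (j + k - i) (by omega), mul_zero]
  rw [iteratedDeriv_fun_mul hh hf,
    Finset.sum_eq_add_of_mem 0 k (by simp) (by simp) (by omega) other_terms_zero]
  simp

end NormedRing

theorem stmt_1_general {𝕜 𝔸 : Type*} [NontriviallyNormedField 𝕜] [NormedCommRing 𝔸]
    [NormedAlgebra 𝕜 𝔸] [NoZeroDivisors 𝔸] [CharZero 𝔸] {f h : 𝕜 → 𝔸} {x : 𝕜} {j k : ℕ}
    (hf : ContDiffAt 𝕜 (j + k : ℕ) f x) (hh : ContDiffAt 𝕜 (j + k : ℕ) h x) (hk : 1 ≤ k)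
    (hf_ne : iteratedDeriv j f x ≠ 0) (hf_zero : ∀ m < j, iteratedDeriv m f x = 0)
    (hh_ne : iteratedDeriv k h x ≠ 0)
    (hh_zero : ∀ l, 1 ≤ l → l < k → iteratedDeriv l h x = 0) :
    iteratedDeriv (j + k) (fun y => h y * f y) x * iteratedDeriv j f x -
        iteratedDeriv j (fun y => h y * f y) x * iteratedDeriv (j + k) f x =
      (j + k).choose k * iteratedDeriv k h x * iteratedDeriv j f x ^ 2 ∧
    (j + k).choose k * iteratedDeriv k h x * iteratedDeriv j f x ^ 2 ≠ 0 := by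
  have hj_le : (j : WithTop ℕ∞) ≤ (j + k : ℕ) := by exact_mod_cast Nat.le_add_right j k
  have choose_ne_zero : ((j + k).choose k : 𝔸) ≠ 0 :=
    Nat.cast_ne_zero.mpr (Nat.choose_pos (Nat.le_add_left k j)).ne'
  constructor
  · rw [iteratedDeriv_fun_mul_of_forall_lt_eq_zero (hh.of_le hj_le) (hf.of_le hj_le) hf_zero,
      iteratedDeriv_add_fun_mul_of_forall_lt_eq_zero hk hh hf hf_zero hh_zero]
    ring
  · exact mul_ne_zero (mul_ne_zero choose_ne_zero hh_ne) (pow_ne_zero 2 hf_ne)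

/-- Let `f, h : ℝ → ℝ` be smooth, `j` the smallest natural number with
`f⁽ʲ⁾(0) ≠ 0`, and `k ≥ 1` the smallest positive integer with `h⁽ᵏ⁾(0) ≠ 0`. Then
`(h·f)⁽ʲ⁺ᵏ⁾(0)·f⁽ʲ⁾(0) − (h·f)⁽ʲ⁾(0)·f⁽ʲ⁺ᵏ⁾(0) = C(j+k,k)·h⁽ᵏ⁾(0)·(f⁽ʲ⁾(0))²`,
and in particular this expression is nonzero. -/
theorem stmt_1 (f h : ℝ → ℝ) (hf : ContDiff ℝ (⊤ : ℕ∞) f) (hh : ContDiff ℝ (⊤ : ℕ∞) h)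
    (j k : ℕ) (hk1 : 1 ≤ k)
    (hj : iteratedDeriv j f 0 ≠ 0) (hjmin : ∀ m : ℕ, m < j → iteratedDeriv m f 0 = 0)
    (hkne : iteratedDeriv k h 0 ≠ 0)
    (hkmin : ∀ l : ℕ, 1 ≤ l → l < k → iteratedDeriv l h 0 = 0) :
    iteratedDeriv (j + k) (fun x => h x * f x) 0 * iteratedDeriv j f 0 -
        iteratedDeriv j (fun x => h x * f x) 0 * iteratedDeriv (j + k) f 0 =
      ((j + k).choose k : ℝ) * iteratedDeriv k h 0 * (iteratedDeriv j f 0) ^ 2 ∧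
    ((j + k).choose k : ℝ) * iteratedDeriv k h 0 * (iteratedDeriv j f 0) ^ 2 ≠ 0 := by
  exact stmt_1_general (contDiff_infty.mp hf _).contDiffAt (contDiff_infty.mp hh _).contDiffAt
    hk1 hj hjmin hkne hkmin
end

section
/- Let f, h : ℝⁿ → ℝ be infinitely differentiable. Suppose that for all multi-indices α, β ∈ ℕⁿ the symmetry relation ∂^α(h·f)(0) · ∂^β f(0) = ∂^β(h·f)(0) · ∂^α f(0) holds (this is the statement that ∂_x^α ∂_y^β (h(x)f(x)f(y)) and ∂_x^β ∂_y^α (h(x)f(x)f(y)) agree at (x,y) = (0,0)). Then either ∂^α f(0) = 0 for every multi-index α ∈ ℕⁿ, or ∂^β h(0) = 0 for every nonzero multi-index β ∈ ℕⁿ. -/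
/-- The first-order partial derivative of `f : ℝⁿ → ℝ` in the `i`-th coordinate direction. -/
noncomputable def pderivOne {n : ℕ} (i : Fin n) (f : (Fin n → ℝ) → ℝ) : (Fin n → ℝ) → ℝ :=
  fun x => fderiv ℝ f x (Pi.single i 1)

/-- The iterated partial derivative `∂^α f` of `f : ℝⁿ → ℝ` for a multi-index `α ∈ ℕⁿ`:
the derivative in the `i`-th coordinate direction is applied `α i` times, for each `i`. -/
noncomputable def mderiv {n : ℕ} (α : Fin n → ℕ) (f : (Fin n → ℝ) → ℝ) : (Fin n → ℝ) → ℝ :=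
  (List.finRange n).foldr (fun i g => (pderivOne i)^[α i] g) f

/-!
Taking Taylor series at a point turns products of smooth functions into products of formal power
series. Writing `F` and `H` for the Taylor series of `f` and `h` at `0`, the symmetry relation says
that the coefficient families of `H * F` and `F` are proportional. If some coefficient `F_γ` is
nonzero, this reads `F_γ • (H * F) = (H * F)_γ • F`, and since formal power series over a domain
form a domain, cancelling `F` shows that `H` is constant.
-/

open Finsupp MvPowerSeries

open scoped ContDiff Nat

section PowerSeries

variable {σ R : Type*}

theorem finsupp_nat_induction {motive : (σ →₀ ℕ) → Prop} (zero : motive 0)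
    (add_single : ∀ α i, motive α → motive (α + single i 1)) (α : σ →₀ ℕ) : motive α := by
  induction α using Finsupp.induction₂ with
  | zero => exact zero
  | add_single i k α _ _ hα =>
    clear * - add_single hα
    induction k with
    | zero => simpa only [single_zero, add_zero] using hα
    | succ k ih => simpa only [single_add, add_assoc] using add_single _ i ih

theorem coeff_add_single_eq_of_coeff_pderiv_eq [CommSemiring R] [IsAddTorsionFree R]
    {F G : MvPowerSeries σ R} {α : σ →₀ ℕ} {i : σ}
    (h : coeff α (pderiv R i F) = coeff α (pderiv R i G)) :
    coeff (α + single i 1) F = coeff (α + single i 1) G := by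
  simp only [coeff_pderiv, ← Nat.cast_add_one, ← nsmul_eq_mul'] at h
  exact nsmul_right_injective (α i).succ_ne_zero h

theorem eq_zero_or_coeff_eq_zero_of_coeff_mul_symm [CommRing R] [NoZeroDivisors R]
    {F H : MvPowerSeries σ R}
    (hsym : ∀ α β, coeff α (H * F) * coeff β F = coeff β (H * F) * coeff α F) :
    F = 0 ∨ ∀ β ≠ 0, coeff β H = 0 := by
  classical
  refine or_iff_not_imp_left.2 fun hF β hβ => ?_
  obtain ⟨γ, hγ⟩ := (ne_zero_iff_exists_coeff_ne_zero F).1 hF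
  have proportional : C (coeff γ F) * H * F = C (coeff γ (H * F)) * F := by
    ext α
    rw [mul_assoc, coeff_C_mul, coeff_C_mul, mul_comm, hsym]
  have constant : C (coeff γ F) * H = C (coeff γ (H * F)) :=
    mul_right_cancel₀ hF proportional
  have vanishing : coeff γ F * coeff β H = 0 := by
    rw [← coeff_C_mul, constant, coeff_C, if_neg hβ]
  exact (mul_eq_zero.1 vanishing).resolve_left hγ

theorem prod_factorial_add_single [Fintype σ] (α : σ →₀ ℕ) (i : σ) :
    ∏ j, ((α + single i 1 : σ →₀ ℕ) j)! = (α i + 1) * ∏ j, (α j)! := by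
  classical
  rw [Fintype.prod_eq_mul_prod_compl i, Fintype.prod_eq_mul_prod_compl i, ← mul_assoc]
  congr 1
  · simp [Nat.factorial_succ]
  · refine Finset.prod_congr rfl fun j hj => ?_
    have hji : j ≠ i := by simpa using hj
    simp [hji]

end PowerSeries

section PartialDerivatives

variable {n : ℕ} {f g : (Fin n → ℝ) → ℝ}

theorem contDiff_pderivOne {k m : ℕ∞ω} (i : Fin n) (hf : ContDiff ℝ k f) (hmk : m + 1 ≤ k) :
    ContDiff ℝ m (pderivOne i f) :=
  (hf.fderiv_right hmk).clm_apply contDiff_const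

theorem contDiff_infty_pderivOne (i : Fin n) (hf : ContDiff ℝ ∞ f) :
    ContDiff ℝ ∞ (pderivOne i f) :=
  contDiff_pderivOne i hf (by simp)

theorem contDiff_iterate_pderivOne (i : Fin n) (k : ℕ) (hf : ContDiff ℝ ∞ f) :
    ContDiff ℝ ∞ ((pderivOne i)^[k] f) :=
  Function.Iterate.rec (ContDiff ℝ ∞) hf (fun _ => contDiff_infty_pderivOne i) k

theorem pderivOne_add (i : Fin n) (hf : Differentiable ℝ f) (hg : Differentiable ℝ g) :
    pderivOne i (f + g) = pderivOne i f + pderivOne i g := by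
  funext x
  simp [pderivOne, fderiv_add (hf x) (hg x)]

theorem pderivOne_mul (i : Fin n) (hf : Differentiable ℝ f) (hg : Differentiable ℝ g) :
    pderivOne i (f * g) = f * pderivOne i g + g * pderivOne i f := by
  funext x
  simp [pderivOne, fderiv_mul (hf x) (hg x)]

theorem pderivOne_pderivOne_apply (i j : Fin n) (hf : ContDiff ℝ 2 f) (x : Fin n → ℝ) :
    pderivOne i (pderivOne j f) x =
      fderiv ℝ (fderiv ℝ f) x (Pi.single i 1) (Pi.single j 1) := by
  have hdf : Differentiable ℝ (fderiv ℝ f) :=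
    (hf.fderiv_right (m := 1) (by norm_num)).differentiable one_ne_zero
  unfold pderivOne
  simp [fderiv_clm_apply (hdf x) (differentiableAt_const _)]

theorem pderivOne_comm (i j : Fin n) (hf : ContDiff ℝ 2 f) :
    pderivOne i (pderivOne j f) = pderivOne j (pderivOne i f) := by
  funext x
  rw [pderivOne_pderivOne_apply i j hf, pderivOne_pderivOne_apply j i hf]
  exact (hf.contDiffAt.isSymmSndFDerivAt (by simp)).eq _ _

theorem pderivOne_iterate_comm (i j : Fin n) (k : ℕ) (hf : ContDiff ℝ ∞ f) :
    pderivOne i ((pderivOne j)^[k] f) = (pderivOne j)^[k] (pderivOne i f) := by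
  induction k with
  | zero => rfl
  | succ k ih =>
    have hk : ContDiff ℝ 2 ((pderivOne j)^[k] f) :=
      (contDiff_iterate_pderivOne j k hf).of_le (WithTop.coe_le_coe.2 le_top)
    rw [Function.iterate_succ_apply', Function.iterate_succ_apply', pderivOne_comm i j hk, ih]

/-- The part of `∂^α` involving only the coordinates listed in `l`. The full `∂^α` is the case
`l = List.finRange n`; general lists allow induction over the coordinates. -/
noncomputable def listDeriv (l : List (Fin n)) (α : Fin n → ℕ) (f : (Fin n → ℝ) → ℝ) :
    (Fin n → ℝ) → ℝ :=
  l.foldr (fun i g => (pderivOne i)^[α i] g) f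

theorem listDeriv_cons (i : Fin n) (l : List (Fin n)) (α : Fin n → ℕ) (f : (Fin n → ℝ) → ℝ) :
    listDeriv (i :: l) α f = (pderivOne i)^[α i] (listDeriv l α f) :=
  rfl

theorem contDiff_listDeriv (l : List (Fin n)) (α : Fin n → ℕ) (hf : ContDiff ℝ ∞ f) :
    ContDiff ℝ ∞ (listDeriv l α f) := by
  induction l with
  | nil => exact hf
  | cons i l ih => exact contDiff_iterate_pderivOne i (α i) ih

theorem pderivOne_listDeriv (i : Fin n) (l : List (Fin n)) (α : Fin n → ℕ)
    (hf : ContDiff ℝ ∞ f) :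
    pderivOne i (listDeriv l α f) = listDeriv l α (pderivOne i f) := by
  induction l with
  | nil => rfl
  | cons j l ih =>
    rw [listDeriv_cons, listDeriv_cons,
      pderivOne_iterate_comm i j _ (contDiff_listDeriv l α hf), ih]

theorem listDeriv_add_single_of_notMem {i : Fin n} {l : List (Fin n)} (hi : i ∉ l)
    (α : Fin n → ℕ) (f : (Fin n → ℝ) → ℝ) :
    listDeriv l (α + Pi.single i 1) f = listDeriv l α f := by
  refine List.foldr_ext _ _ _ fun j hj g => ?_
  have hji : j ≠ i := ne_of_mem_of_not_mem hj hi
  simp [hji]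

theorem listDeriv_add_single_of_mem {i : Fin n} {l : List (Fin n)} (hl : l.Nodup) (hi : i ∈ l)
    (α : Fin n → ℕ) (hf : ContDiff ℝ ∞ f) :
    listDeriv l (α + Pi.single i 1) f = listDeriv l α (pderivOne i f) := by
  induction l with
  | nil => simp at hi
  | cons j l ih =>
    obtain ⟨hjl, hl⟩ := List.nodup_cons.1 hl
    rw [listDeriv_cons, listDeriv_cons]
    obtain rfl | hij := eq_or_ne i j
    · rw [listDeriv_add_single_of_notMem hjl, ← pderivOne_listDeriv i l α hf]
      simp [Function.iterate_succ_apply]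
    · rw [ih hl (List.mem_of_ne_of_mem hij hi)]
      simp [hij.symm]

theorem mderiv_add_single (α : Fin n → ℕ) (i : Fin n) (hf : ContDiff ℝ ∞ f) :
    mderiv (α + Pi.single i 1) f = mderiv α (pderivOne i f) :=
  listDeriv_add_single_of_mem (List.nodup_finRange n) (List.mem_finRange i) α hf

theorem mderiv_zero (f : (Fin n → ℝ) → ℝ) : mderiv 0 f = f :=
  List.foldr_fixed (List.finRange n)

end PartialDerivatives

section TaylorSeries

variable {n : ℕ} {f g : (Fin n → ℝ) → ℝ}

/-- The formal Taylor series `∑ ∂^α f(x) / α! X^α` of `f : ℝⁿ → ℝ` at the point `x`. -/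
noncomputable def taylorSeries (f : (Fin n → ℝ) → ℝ) (x : Fin n → ℝ) :
    MvPowerSeries (Fin n) ℝ :=
  fun α => mderiv α f x / (∏ i, (α i)! : ℕ)

theorem coeff_taylorSeries (f : (Fin n → ℝ) → ℝ) (x : Fin n → ℝ) (α : Fin n →₀ ℕ) :
    coeff α (taylorSeries f x) = mderiv α f x / (∏ i, (α i)! : ℕ) :=
  rfl

theorem coeff_taylorSeries_eq_zero {x : Fin n → ℝ} {α : Fin n →₀ ℕ} :
    coeff α (taylorSeries f x) = 0 ↔ mderiv α f x = 0 := by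
  simp [coeff_taylorSeries, Finset.prod_eq_zero_iff, Nat.factorial_ne_zero]

theorem constantCoeff_taylorSeries (f : (Fin n → ℝ) → ℝ) (x : Fin n → ℝ) :
    constantCoeff (taylorSeries f x) = f x := by
  simp [← coeff_zero_eq_constantCoeff_apply, coeff_taylorSeries, mderiv_zero]

theorem pderiv_taylorSeries (i : Fin n) (hf : ContDiff ℝ ∞ f) (x : Fin n → ℝ) :
    pderiv ℝ i (taylorSeries f x) = taylorSeries (pderivOne i f) x := by
  ext α
  rw [coeff_pderiv, coeff_taylorSeries, coeff_taylorSeries, prod_factorial_add_single,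
    Finsupp.coe_add, single_eq_pi_single, mderiv_add_single _ i hf]
  have hα : (α i : ℝ) + 1 ≠ 0 := by positivity
  push_cast
  field_simp

theorem taylorSeries_add (hf : ContDiff ℝ ∞ f) (hg : ContDiff ℝ ∞ g) (x : Fin n → ℝ) :
    taylorSeries (f + g) x = taylorSeries f x + taylorSeries g x := by
  ext α
  induction α using finsupp_nat_induction generalizing f g with
  | zero => simp [constantCoeff_taylorSeries]
  | add_single α i ih =>
    apply coeff_add_single_eq_of_coeff_pderiv_eq
    rw [pderiv_taylorSeries (f := f + g) i (hf.add hg), map_add, pderiv_taylorSeries i hf,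
      pderiv_taylorSeries i hg,
      pderivOne_add i (hf.differentiable (by simp)) (hg.differentiable (by simp)),
      ih (contDiff_infty_pderivOne i hf) (contDiff_infty_pderivOne i hg)]

theorem taylorSeries_mul (hf : ContDiff ℝ ∞ f) (hg : ContDiff ℝ ∞ g) (x : Fin n → ℝ) :
    taylorSeries (f * g) x = taylorSeries f x * taylorSeries g x := by
  ext α
  induction α using finsupp_nat_induction generalizing f g with
  | zero => simp [constantCoeff_taylorSeries]
  | add_single α i ih =>
    apply coeff_add_single_eq_of_coeff_pderiv_eq
    have hf' := contDiff_infty_pderivOne i hf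
    have hg' := contDiff_infty_pderivOne i hg
    have hfg' : ContDiff ℝ ∞ (f * pderivOne i g) := hf.mul hg'
    have hgf' : ContDiff ℝ ∞ (g * pderivOne i f) := hg.mul hf'
    calc coeff α (pderiv ℝ i (taylorSeries (f * g) x))
      _ = coeff α (taylorSeries (f * pderivOne i g + g * pderivOne i f) x) := by
        rw [pderiv_taylorSeries (f := f * g) i (hf.mul hg),
          pderivOne_mul i (hf.differentiable (by simp)) (hg.differentiable (by simp))]
      _ = coeff α (taylorSeries f x * taylorSeries (pderivOne i g) x +
            taylorSeries g x * taylorSeries (pderivOne i f) x) := by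
        rw [taylorSeries_add hfg' hgf', map_add, map_add, ih hf hg', ih hg hf']
      _ = coeff α (pderiv ℝ i (taylorSeries f x * taylorSeries g x)) := by
        rw [Derivation.leibniz, pderiv_taylorSeries i hf, pderiv_taylorSeries i hg, smul_eq_mul,
          smul_eq_mul]

end TaylorSeries

/-- If `f, h : ℝⁿ → ℝ` are smooth and satisfy the symmetry relation
`∂^α(h·f)(0)·∂^β f(0) = ∂^β(h·f)(0)·∂^α f(0)` for all multi-indices `α, β ∈ ℕⁿ`, then
either `∂^α f(0) = 0` for every multi-index `α`, or `∂^β h(0) = 0` for every nonzero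
multi-index `β`. -/
theorem stmt_3 {n : ℕ} (f h : (Fin n → ℝ) → ℝ)
    (hf : ContDiff ℝ (⊤ : ℕ∞) f) (hh : ContDiff ℝ (⊤ : ℕ∞) h)
    (hsym : ∀ α β : Fin n → ℕ,
      mderiv α (fun x => h x * f x) 0 * mderiv β f 0 =
        mderiv β (fun x => h x * f x) 0 * mderiv α f 0) :
    (∀ α : Fin n → ℕ, mderiv α f 0 = 0) ∨
      (∀ β : Fin n → ℕ, β ≠ 0 → mderiv β h 0 = 0) := by
  have hcoeff (α β : Fin n →₀ ℕ) :
      coeff α (taylorSeries h 0 * taylorSeries f 0) * coeff β (taylorSeries f 0) =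
        coeff β (taylorSeries h 0 * taylorSeries f 0) * coeff α (taylorSeries f 0) := by
    have hαβ : mderiv α (h * f) 0 * mderiv β f 0 = mderiv β (h * f) 0 * mderiv α f 0 := hsym α β
    rw [← taylorSeries_mul hh hf]
    simp only [coeff_taylorSeries]
    rw [div_mul_div_comm, div_mul_div_comm, hαβ, mul_comm (Nat.cast _)]
  obtain hF | hH := eq_zero_or_coeff_eq_zero_of_coeff_mul_symm hcoeff
  · refine Or.inl fun α => ?_
    exact coeff_taylorSeries_eq_zero (α := equivFunOnFinite.symm α) |>.1 (by rw [hF, map_zero])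
  · refine Or.inr fun β hβ => ?_
    have hβ' : equivFunOnFinite.symm β ≠ 0 := fun h0 => hβ (congrArg DFunLike.coe h0)
    exact coeff_taylorSeries_eq_zero.1 (hH (equivFunOnFinite.symm β) hβ')
end

section
/- Let f, h : ℝⁿ → ℝ be infinitely differentiable and suppose that for all multi-indices α, β ∈ ℕⁿ one has ∂^α(h·f)(0) · ∂^β f(0) = ∂^β(h·f)(0) · ∂^α f(0). Then for every v ∈ ℝⁿ and all j, k ∈ ℕ, the one-dimensional symmetry relation holds along the line through 0 in direction v: (d/dt)^j|_{t=0} (h·f)(t·v) · (d/ds)^k|_{s=0} f(s·v) = (d/dt)^k|_{t=0} (h·f)(t·v) · (d/ds)^j|_{s=0} f(s·v). -/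
/-!
On the space of smooth functions the partial derivatives `∂ᵢ` commute, so the multinomial theorem
applies to the directional derivative `∂_v = ∑ᵢ vᵢ ∂ᵢ` and gives
`(d/dt)ʲ g(x + t v) = ∑_{|α| = j} (j! / α!) v^α ∂^α g(x + t v)`. The coefficients do not depend on
`g`, so both sides of the symmetry relation along a line are the same bilinear combination of the
two sides of the relations between the `∂^α` and `∂^β`.
-/

section Multinomial

open Finset

variable {ι R A : Type*} [CommSemiring R] [Semiring A] [Algebra R A]

lemma noncommProd_smul (s : Finset ι) (c : ι → R) (D : ι → A)
    (hD : (s : Set ι).Pairwise (Function.onFun Commute D)) :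
    s.noncommProd (fun i => c i • D i)
        (hD.mono' fun _ _ h => (h.smul_left _).smul_right _) =
      (∏ i ∈ s, c i) • s.noncommProd D hD := by
  induction s using Finset.cons_induction with
  | empty => simp
  | cons i s hi ih =>
    rw [noncommProd_cons, noncommProd_cons, prod_cons, ← smul_mul_smul_comm, ih]

lemma sum_smul_pow_eq_sum_piAntidiag_of_commute [DecidableEq ι] (s : Finset ι) (c : ι → R)
    (D : ι → A) (hD : (s : Set ι).Pairwise (Function.onFun Commute D)) (m : ℕ) :
    (∑ i ∈ s, c i • D i) ^ m =
      ∑ α ∈ s.piAntidiag m, (Nat.multinomial s α * ∏ i ∈ s, c i ^ α i : R) •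
        s.noncommProd (fun i => D i ^ α i) (hD.mono' fun _ _ h => h.pow_pow _ _) := by
  rw [sum_pow_eq_sum_piAntidiag_of_commute _ _
    (hD.mono' fun _ _ h => (h.smul_left _).smul_right _)]
  refine sum_congr rfl fun α _ => ?_
  simp only [smul_pow]
  rw [noncommProd_smul s _ _ (hD.mono' fun _ _ h => h.pow_pow _ _), mul_smul,
    Nat.cast_smul_eq_nsmul, nsmul_eq_mul]

end Multinomial

section SmoothFunctions

open scoped ContDiff

variable (𝕜 E F : Type*) [NontriviallyNormedField 𝕜] [NormedAddCommGroup E] [NormedSpace 𝕜 E]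
  [NormedAddCommGroup F] [NormedSpace 𝕜 F]

/-- The space of `C^∞` functions `E → F`, on which directional derivatives act as linear
endomorphisms. -/
def smoothFunctions : Submodule 𝕜 (E → F) where
  carrier := {f | ContDiff 𝕜 ∞ f}
  add_mem' hf hg := Set.mem_ofPred.2 ((Set.mem_ofPred.1 hf).add (Set.mem_ofPred.1 hg))
  zero_mem' := Set.mem_ofPred.2 contDiff_zero_fun
  smul_mem' c _ hf := Set.mem_ofPred.2 ((Set.mem_ofPred.1 hf).const_smul c)

variable {𝕜 E F}

lemma mem_smoothFunctions {f : E → F} : f ∈ smoothFunctions 𝕜 E F ↔ ContDiff 𝕜 ∞ f := Iff.rfl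

namespace smoothFunctions

lemma contDiff (f : smoothFunctions 𝕜 E F) : ContDiff 𝕜 ∞ (f : E → F) :=
  mem_smoothFunctions.1 f.2

lemma differentiable (f : smoothFunctions 𝕜 E F) : Differentiable 𝕜 (f : E → F) :=
  (contDiff f).differentiable (by simp)

lemma contDiff_fderiv (f : smoothFunctions 𝕜 E F) : ContDiff 𝕜 ∞ (fderiv 𝕜 (f : E → F)) :=
  (contDiff f).fderiv_right (by simp)

end smoothFunctions

open smoothFunctions

/-- The directional derivative `∂_v f : x ↦ f'(x) v` on smooth functions, bundled as a linear map
from directions `v` to endomorphisms so that `∂_v` may be expanded in a basis and iterated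
derivatives are powers. -/
noncomputable def dirDeriv : E →ₗ[𝕜] Module.End 𝕜 (smoothFunctions 𝕜 E F) :=
  LinearMap.mk₂ 𝕜
    (fun v f => ⟨fun x => fderiv 𝕜 f x v,
      mem_smoothFunctions.2 ((contDiff_fderiv f).clm_apply contDiff_const)⟩)
    (fun v w f => by ext x; simp)
    (fun c v f => by ext x; simp)
    (fun v f g => by ext x; simp [fderiv_add (differentiable f x) (differentiable g x)])
    (fun c v f => by ext x; simp [fderiv_const_smul (differentiable f x)])

lemma coe_dirDeriv (v : E) (f : smoothFunctions 𝕜 E F) :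
    (dirDeriv v f : E → F) = fun x => fderiv 𝕜 (f : E → F) x v := rfl

lemma dirDeriv_dirDeriv_apply (v w : E) (f : smoothFunctions 𝕜 E F) (x : E) :
    (dirDeriv v (dirDeriv w f) : E → F) x = fderiv 𝕜 (fderiv 𝕜 (f : E → F)) x v w := by
  have hf : DifferentiableAt 𝕜 (fderiv 𝕜 (f : E → F)) x :=
    (contDiff_fderiv f).differentiable (by simp) x
  simp [coe_dirDeriv, fderiv_clm_apply hf (differentiableAt_const w)]

lemma dirDeriv_commute [IsRCLikeNormedField 𝕜] (v w : E) :
    Commute (dirDeriv v : Module.End 𝕜 (smoothFunctions 𝕜 E F)) (dirDeriv w) := by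
  ext f x
  have hsymm : IsSymmSndFDerivAt 𝕜 (f : E → F) x :=
    (contDiff f).contDiffAt.isSymmSndFDerivAt (by simpa using ENat.LEInfty.out)
  simp only [Module.End.mul_apply, dirDeriv_dirDeriv_apply, hsymm.eq v w]

lemma dirDeriv_eq_sum_smul_single {ι : Type*} [Fintype ι] [DecidableEq ι] (v : ι → 𝕜) :
    (dirDeriv v : Module.End 𝕜 (smoothFunctions 𝕜 (ι → 𝕜) F)) =
      ∑ i, v i • dirDeriv (Pi.single i 1) := by
  conv_lhs => rw [pi_eq_sum_univ' v]
  simp only [map_sum, map_smul]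

lemma hasDerivAt_comp_line (f : smoothFunctions 𝕜 E F) (x v : E) (t : 𝕜) :
    HasDerivAt (fun s : 𝕜 => (f : E → F) (x + s • v)) ((dirDeriv v f : E → F) (x + t • v)) t := by
  have hline : HasDerivAt (fun s : 𝕜 => x + s • v) v t := by
    simpa using ((hasDerivAt_id t).smul_const v).const_add x
  exact (differentiable f (x + t • v)).hasFDerivAt.comp_hasDerivAt t hline

lemma iteratedDeriv_comp_line (f : smoothFunctions 𝕜 E F) (x v : E) (m : ℕ) :
    iteratedDeriv m (fun t : 𝕜 => (f : E → F) (x + t • v)) =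
      fun t => ((dirDeriv v ^ m) f : E → F) (x + t • v) := by
  induction m with
  | zero => simp
  | succ m ih =>
    ext t
    rw [iteratedDeriv_succ, ih, (hasDerivAt_comp_line _ x v t).deriv, pow_succ',
      Module.End.mul_apply]

end SmoothFunctions

section MultiIndex

variable {n : ℕ}

lemma pderivOne_eq_dirDeriv (i : Fin n) (f : smoothFunctions ℝ (Fin n → ℝ) ℝ) :
    pderivOne i f = (dirDeriv (Pi.single i 1) f : (Fin n → ℝ) → ℝ) := rfl

lemma iterate_pderivOne_eq_dirDeriv_pow (i : Fin n) (m : ℕ)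
    (f : smoothFunctions ℝ (Fin n → ℝ) ℝ) :
    (pderivOne i)^[m] f = ((dirDeriv (Pi.single i 1) ^ m) f : (Fin n → ℝ) → ℝ) := by
  induction m with
  | zero => rfl
  | succ m ih =>
    rw [Function.iterate_succ_apply', ih, pow_succ', Module.End.mul_apply,
      pderivOne_eq_dirDeriv]

lemma mderiv_eq_noncommProd_dirDeriv (α : Fin n → ℕ) (f : smoothFunctions ℝ (Fin n → ℝ) ℝ) :
    mderiv α f = (Finset.univ.noncommProd (fun i => dirDeriv (Pi.single i 1) ^ α i)
      (fun _ _ _ _ _ => (dirDeriv_commute _ _).pow_pow _ _) f : (Fin n → ℝ) → ℝ) := by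
  have hlist : ∀ l : List (Fin n), l.foldr (fun i g => (pderivOne i)^[α i] g) f =
      ((l.map fun i => dirDeriv (Pi.single i 1) ^ α i).prod f : (Fin n → ℝ) → ℝ) := by
    intro l
    induction l with
    | nil => rfl
    | cons i l ih =>
      rw [List.foldr_cons, ih, iterate_pderivOne_eq_dirDeriv_pow, List.map_cons, List.prod_cons,
        Module.End.mul_apply]
  simp only [mderiv, hlist, ← List.toFinset_finRange]
  rw [Finset.noncommProd_toFinset _ _ _ (List.nodup_finRange n)]

theorem iteratedDeriv_comp_line_eq_sum_mderiv {g : (Fin n → ℝ) → ℝ} (hg : ContDiff ℝ (⊤ : ℕ∞) g)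
    (x v : Fin n → ℝ) (m : ℕ) (t : ℝ) :
    iteratedDeriv m (fun s : ℝ => g (x + s • v)) t =
      ∑ α ∈ Finset.univ.piAntidiag m,
        Nat.multinomial Finset.univ α * (∏ i, v i ^ α i) * mderiv α g (x + t • v) := by
  lift g to smoothFunctions ℝ (Fin n → ℝ) ℝ using mem_smoothFunctions.2 hg
  rw [iteratedDeriv_comp_line, dirDeriv_eq_sum_smul_single,
    sum_smul_pow_eq_sum_piAntidiag_of_commute _ _ _ fun _ _ _ _ _ => dirDeriv_commute _ _]
  simp [mderiv_eq_noncommProd_dirDeriv]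

end MultiIndex

theorem stmt_4_general {n : ℕ} {F f : (Fin n → ℝ) → ℝ}
    (hF : ContDiff ℝ (⊤ : ℕ∞) F) (hf : ContDiff ℝ (⊤ : ℕ∞) f) (x v : Fin n → ℝ) (j k : ℕ)
    (hsym : ∀ α β : Fin n → ℕ, ∑ i, α i = j → ∑ i, β i = k →
      mderiv α F x * mderiv β f x = mderiv β F x * mderiv α f x) :
    iteratedDeriv j (fun t : ℝ => F (x + t • v)) 0 *
        iteratedDeriv k (fun s : ℝ => f (x + s • v)) 0 =
      iteratedDeriv k (fun t : ℝ => F (x + t • v)) 0 *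
        iteratedDeriv j (fun s : ℝ => f (x + s • v)) 0 := by
  simp only [iteratedDeriv_comp_line_eq_sum_mderiv hF, iteratedDeriv_comp_line_eq_sum_mderiv hf,
    zero_smul, add_zero]
  rw [Finset.sum_mul_sum, Finset.sum_mul_sum, Finset.sum_comm]
  refine Finset.sum_congr rfl fun β hβ => Finset.sum_congr rfl fun α hα => ?_
  have hαβ := hsym α β (Finset.mem_piAntidiag.1 hα).1 (Finset.mem_piAntidiag.1 hβ).1
  rw [mul_mul_mul_comm, hαβ]
  ring

/-- If `f, h : ℝⁿ → ℝ` are smooth and satisfy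
`∂^α(h·f)(0)·∂^β f(0) = ∂^β(h·f)(0)·∂^α f(0)` for all multi-indices `α, β ∈ ℕⁿ`, then for
every `v ∈ ℝⁿ` and all `j, k ∈ ℕ` the one-dimensional symmetry relation holds along the
line through `0` in direction `v`. -/
theorem stmt_4 {n : ℕ} (f h : (Fin n → ℝ) → ℝ)
    (hf : ContDiff ℝ (⊤ : ℕ∞) f) (hh : ContDiff ℝ (⊤ : ℕ∞) h)
    (hsym : ∀ α β : Fin n → ℕ,
      mderiv α (fun x => h x * f x) 0 * mderiv β f 0 =
        mderiv β (fun x => h x * f x) 0 * mderiv α f 0) :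
    ∀ v : Fin n → ℝ, ∀ j k : ℕ,
      iteratedDeriv j (fun t : ℝ => h (t • v) * f (t • v)) 0 *
          iteratedDeriv k (fun s : ℝ => f (s • v)) 0 =
        iteratedDeriv k (fun t : ℝ => h (t • v) * f (t • v)) 0 *
          iteratedDeriv j (fun s : ℝ => f (s • v)) 0 := by
  intro v j k
  simpa only [zero_add] using
    stmt_4_general (hh.mul hf) hf 0 v j k fun α β _ _ => hsym α β
end

section
/- Let f : ℝⁿ → ℝ be infinitely differentiable and let U ⊆ ℝⁿ be a nonempty open set. Suppose that for every v ∈ U and every j ∈ ℕ, the j-th derivative of the one-variable function t ↦ f(t·v) at t = 0 vanishes. Then ∂^α f(0) = 0 for every multi-index α ∈ ℕⁿ. -/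
/-!
At order `j`, the derivative of `t ↦ f (x + t • v)` at `0` is the diagonal value
`D^j f(x)(v, …, v)`. Clairaut's theorem applied to `D^(j-2) f` and induction on `j` show that
`D^j f(x)` is invariant under adjacent transpositions, hence symmetric. A symmetric multilinear
map whose diagonal vanishes on a nonempty open set is zero, since the `j`-th derivative of its
diagonal is `j!` times the map itself. So all the Fréchet derivatives of `f` at `x` vanish, and
this property passes to every directional derivative of `f`.
-/

open Equiv Filter Topology
open scoped ContDiff

lemma tail_comp_swap_succ {α : Type*} {n : ℕ} (m : Fin (n + 1) → α) (i j : Fin n) :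
    Fin.tail (m ∘ swap i.succ j.succ) = Fin.tail m ∘ swap i j := by
  ext k
  simp only [Fin.tail, Function.comp_apply, (Fin.succ_injective n).map_swap]

section NormedSpace

variable {𝕜 : Type*} [NontriviallyNormedField 𝕜]
  {E : Type*} [NormedAddCommGroup E] [NormedSpace 𝕜 E]
  {F : Type*} [NormedAddCommGroup F] [NormedSpace 𝕜 F]
  {f : E → F} {x : E}

lemma iteratedFDeriv_succ_apply_eq_fderiv {n : ℕ} (hf : ContDiffAt 𝕜 (n + 1) f x)
    (m : Fin (n + 1) → E) :
    iteratedFDeriv 𝕜 (n + 1) f x m =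
      fderiv 𝕜 (fun y ↦ iteratedFDeriv 𝕜 n f y (Fin.tail m)) x (m 0) := by
  have hdiff : DifferentiableAt 𝕜 (iteratedFDeriv 𝕜 n f) x :=
    hf.differentiableAt_iteratedFDeriv (by exact_mod_cast n.lt_succ_self)
  rw [iteratedFDeriv_succ_apply_left, fderiv_continuousMultilinear_apply_const_apply hdiff]

lemma iteratedFDeriv_add_two_apply {n : ℕ} (hf : ContDiffAt 𝕜 (n + 2) f x)
    (m : Fin (n + 2) → E) :
    iteratedFDeriv 𝕜 (n + 2) f x m =
      fderiv 𝕜 (fderiv 𝕜 (iteratedFDeriv 𝕜 n f)) x (m 0) (m 1) (Fin.tail (Fin.tail m)) := by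
  have hC2 : ContDiffAt 𝕜 2 (iteratedFDeriv 𝕜 n f) x := hf.iteratedFDeriv_right (add_comm _ _).le
  have hdiff : DifferentiableAt 𝕜 (fderiv 𝕜 (iteratedFDeriv 𝕜 n f)) x :=
    (hC2.fderiv_right (m := 1) one_add_one_eq_two.le).differentiableAt one_ne_zero
  calc
    iteratedFDeriv 𝕜 (n + 2) f x m
        = fderiv 𝕜 (fun y ↦ fderiv 𝕜 (iteratedFDeriv 𝕜 n f) y (m 1) (Fin.tail (Fin.tail m))) x
            (m 0) := iteratedFDeriv_succ_apply_eq_fderiv (by exact_mod_cast hf) m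
    _ = fderiv 𝕜 (fun y ↦ fderiv 𝕜 (iteratedFDeriv 𝕜 n f) y (m 1)) x (m 0)
          (Fin.tail (Fin.tail m)) :=
      fderiv_continuousMultilinear_apply_const_apply
        (hdiff.clm_apply (differentiableAt_const (m 1))) _ _
    _ = fderiv 𝕜 (fderiv 𝕜 (iteratedFDeriv 𝕜 n f)) x (m 0) (m 1) (Fin.tail (Fin.tail m)) := by
      rw [fderiv_clm_apply hdiff (differentiableAt_const (m 1))]
      simp

section Symmetry

variable [IsRCLikeNormedField 𝕜]

lemma iteratedFDeriv_comp_swap_zero_one {n : ℕ} (hf : ContDiffAt 𝕜 (n + 2) f x)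
    (m : Fin (n + 2) → E) :
    iteratedFDeriv 𝕜 (n + 2) f x (m ∘ swap 0 1) = iteratedFDeriv 𝕜 (n + 2) f x m := by
  have hsymm : IsSymmSndFDerivAt 𝕜 (iteratedFDeriv 𝕜 n f) x :=
    (hf.iteratedFDeriv_right (m := 2) (add_comm _ _).le).isSymmSndFDerivAt (by simp)
  have htail : Fin.tail (Fin.tail (m ∘ swap 0 1)) = Fin.tail (Fin.tail m) := by
    ext i
    simp only [Fin.tail, Function.comp_apply]
    rw [swap_apply_of_ne_of_ne (Fin.succ_ne_zero _) (Fin.succ_succ_ne_one i)]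
  rw [iteratedFDeriv_add_two_apply hf, iteratedFDeriv_add_two_apply hf, htail, Function.comp_apply,
    Function.comp_apply, swap_apply_left, swap_apply_right, hsymm.eq]

lemma iteratedFDeriv_comp_swap_castSucc_succ {n : ℕ} (hf : ContDiffAt 𝕜 (n + 1) f x) (i : Fin n)
    (m : Fin (n + 1) → E) :
    iteratedFDeriv 𝕜 (n + 1) f x (m ∘ swap i.castSucc i.succ) =
      iteratedFDeriv 𝕜 (n + 1) f x m := by
  induction n generalizing x with
  | zero => exact i.elim0
  | succ n ih =>
    cases i using Fin.cases with
    | zero => exact iteratedFDeriv_comp_swap_zero_one (by exact_mod_cast hf) m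
    | succ i =>
      have hlower : ∀ᶠ y in 𝓝 x, ContDiffAt 𝕜 (n + 1) f y :=
        (hf.of_le (by simp)).eventually (by exact_mod_cast WithTop.coe_ne_top)
      have hzero : (m ∘ swap i.succ.castSucc i.succ.succ) 0 = m 0 :=
        congrArg m (swap_apply_of_ne_of_ne (Fin.succ_ne_zero i.castSucc).symm
          (Fin.succ_ne_zero i.succ).symm)
      rw [iteratedFDeriv_succ_apply_eq_fderiv hf, iteratedFDeriv_succ_apply_eq_fderiv hf, hzero,
        Fin.castSucc_succ, tail_comp_swap_succ]
      have hcongr : (fun y ↦ iteratedFDeriv 𝕜 (n + 1) f y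
          (Fin.tail m ∘ swap i.castSucc i.succ)) =ᶠ[𝓝 x]
          fun y ↦ iteratedFDeriv 𝕜 (n + 1) f y (Fin.tail m) :=
        hlower.mono fun y hy ↦ ih hy i (Fin.tail m)
      rw [hcongr.fderiv_eq]

theorem iteratedFDeriv_comp_perm {n : ℕ} (hf : ContDiffAt 𝕜 n f x) (σ : Perm (Fin n))
    (m : Fin n → E) :
    iteratedFDeriv 𝕜 n f x (m ∘ σ) = iteratedFDeriv 𝕜 n f x m := by
  cases n with
  | zero => exact congrArg _ (Subsingleton.elim _ _)
  | succ n =>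
    have hσ : σ ∈ Submonoid.closure (Set.range fun i : Fin n ↦ swap i.castSucc i.succ) := by
      rw [Perm.mclosure_swap_castSucc_succ]
      exact Submonoid.mem_top σ
    induction hσ using Submonoid.closure_induction generalizing m with
    | mem _ hswap =>
      obtain ⟨i, rfl⟩ := hswap
      exact iteratedFDeriv_comp_swap_castSucc_succ (by exact_mod_cast hf) i m
    | one => rfl
    | mul σ τ _ _ ihσ ihτ => exact (ihτ (m ∘ σ)).trans (ihσ m)

end Symmetry

theorem eq_zero_of_comp_perm_of_eventually_diagonal_eq_zero [CharZero 𝕜] {n : ℕ}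
    {T : E [×n]→L[𝕜] F} (hsymm : ∀ (σ : Perm (Fin n)) (m : Fin n → E), T (m ∘ σ) = T m) {v₀ : E}
    (hdiag : ∀ᶠ v in 𝓝 v₀, T (fun _ ↦ v) = 0) : T = 0 := by
  ext m
  have hfactorial : (n.factorial : 𝕜) • T m = 0 := calc
    (n.factorial : 𝕜) • T m = ∑ σ : Perm (Fin n), T (m ∘ σ) := by
      simp only [hsymm, Finset.sum_const, Finset.card_univ, Fintype.card_perm, Fintype.card_fin,
        Nat.cast_smul_eq_nsmul]
    _ = iteratedFDeriv 𝕜 n (fun v ↦ T (fun _ ↦ v)) v₀ m :=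
      (T.iteratedFDeriv_comp_diagonal v₀ m).symm
    _ = 0 := by
      have hzero : (fun v ↦ T (fun _ ↦ v)) =ᶠ[𝓝 v₀] fun _ ↦ 0 := hdiag
      rw [(hzero.iteratedFDeriv 𝕜 n).eq_of_nhds, iteratedFDeriv_fun_zero]
      rfl
  exact (smul_eq_zero.mp hfactorial).resolve_left (Nat.cast_ne_zero.mpr n.factorial_ne_zero)

lemma iteratedFDeriv_comp_continuousLinearMap
    {G : Type*} [NormedAddCommGroup G] [NormedSpace 𝕜 G] {j : ℕ} (L : G →L[𝕜] E) {y : G}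
    (hf : ContDiffAt 𝕜 j f (L y)) :
    iteratedFDeriv 𝕜 j (f ∘ L) y =
      (iteratedFDeriv 𝕜 j f (L y)).compContinuousLinearMap fun _ ↦ L := by
  obtain ⟨u, hu, hyu, hfu⟩ := hf.contDiffOn' le_rfl (by simp)
  rw [Set.insert_eq_of_mem (Set.mem_univ _), Set.univ_inter] at hfu
  have hpre : IsOpen (L ⁻¹' u) := hu.preimage L.continuous
  rw [← iteratedFDerivWithin_of_isOpen j hpre hyu, ← iteratedFDerivWithin_of_isOpen j hu hyu]
  exact L.iteratedFDerivWithin_comp_right hfu hu.uniqueDiffOn hpre.uniqueDiffOn hyu le_rfl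

lemma iteratedDeriv_line_eq_iteratedFDeriv {j : ℕ} (hf : ContDiffAt 𝕜 j f x) (v : E) :
    iteratedDeriv j (fun t : 𝕜 ↦ f (x + t • v)) 0 = iteratedFDeriv 𝕜 j f x fun _ ↦ v := by
  let L : 𝕜 →L[𝕜] E := ContinuousLinearMap.toSpanSingleton 𝕜 v
  have hbase : x + L 0 = x := by rw [map_zero, add_zero]
  have hshift : ContDiffAt 𝕜 j (fun z ↦ f (x + z)) (L 0) :=
    ContDiffAt.comp (L 0) (by rwa [hbase]) (contDiffAt_const.add contDiffAt_id)
  have hcomp := iteratedFDeriv_comp_continuousLinearMap L hshift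
  rw [iteratedFDeriv_comp_add_left, hbase] at hcomp
  calc
    iteratedDeriv j (fun t : 𝕜 ↦ f (x + t • v)) 0
        = iteratedFDeriv 𝕜 j ((fun z ↦ f (x + z)) ∘ L) 0 fun _ ↦ 1 := rfl
    _ = iteratedFDeriv 𝕜 j f x fun _ ↦ v := by
      simp only [hcomp, ContinuousMultilinearMap.compContinuousLinearMap_apply, L,
        ContinuousLinearMap.toSpanSingleton_apply, one_smul]

variable (𝕜) in
/-- A function is flat at `x` if it is smooth at `x` and its Taylor series there is zero. The
series includes the term of order `0`, so `f x = 0`. Flatness is preserved by directional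
derivatives, hence by `∂^α`. -/
structure IsFlatAt (f : E → F) (x : E) : Prop where
  contDiffAt : ContDiffAt 𝕜 ∞ f x
  iteratedFDeriv_eq_zero (j : ℕ) : iteratedFDeriv 𝕜 j f x = 0

namespace IsFlatAt

lemma apply_eq_zero (hf : IsFlatAt 𝕜 f x) : f x = 0 := by
  rw [← iteratedFDeriv_zero_apply (𝕜 := 𝕜) (f := f) (x := x) ![], hf.iteratedFDeriv_eq_zero 0]
  rfl

lemma fderiv_apply (hf : IsFlatAt 𝕜 f x) (e : E) : IsFlatAt 𝕜 (fun y ↦ fderiv 𝕜 f y e) x where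
  contDiffAt := (hf.contDiffAt.fderiv_right (m := ∞) (by simp)).clm_apply contDiffAt_const
  iteratedFDeriv_eq_zero j := by
    have hfderiv : ContDiffAt 𝕜 ∞ (fderiv 𝕜 f) x := hf.contDiffAt.fderiv_right (by simp)
    ext m
    calc
      iteratedFDeriv 𝕜 j (fun y ↦ fderiv 𝕜 f y e) x m
          = iteratedFDeriv 𝕜 j (fderiv 𝕜 f) x m e :=
        congrArg (· m) <| (ContinuousLinearMap.apply 𝕜 F e).iteratedFDeriv_comp_left hfderiv
          (by exact_mod_cast le_top)
      _ = iteratedFDeriv 𝕜 (j + 1) f x (Fin.snoc m e) := by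
        rw [iteratedFDeriv_succ_apply_right, Fin.init_snoc, Fin.snoc_last]
      _ = 0 := by rw [hf.iteratedFDeriv_eq_zero (j + 1)]; rfl

lemma iterate_pderivOne {n : ℕ} {f : (Fin n → ℝ) → ℝ} {x : Fin n → ℝ} (hf : IsFlatAt ℝ f x)
    (i : Fin n) (k : ℕ) : IsFlatAt ℝ ((pderivOne i)^[k] f) x :=
  Function.Iterate.rec (IsFlatAt ℝ · x) hf (fun _ hg ↦ hg.fderiv_apply (Pi.single i 1)) k

lemma mderiv {n : ℕ} {f : (Fin n → ℝ) → ℝ} {x : Fin n → ℝ} (hf : IsFlatAt ℝ f x)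
    (α : Fin n → ℕ) : IsFlatAt ℝ (mderiv α f) x :=
  List.foldrRecOn (motive := (IsFlatAt ℝ · x)) _ _ hf
    fun _ hg i _ ↦ hg.iterate_pderivOne i (α i)

end IsFlatAt

end NormedSpace

section RCLike

variable {𝕜 : Type*} [RCLike 𝕜]
  {E : Type*} [NormedAddCommGroup E] [NormedSpace 𝕜 E]
  {F : Type*} [NormedAddCommGroup F] [NormedSpace 𝕜 F]
  {f : E → F} {x : E}

theorem iteratedFDeriv_eq_zero_of_eventually_iteratedDeriv_line_eq_zero
    {j : ℕ} (hf : ContDiffAt 𝕜 j f x) {v₀ : E}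
    (hline : ∀ᶠ v in 𝓝 v₀, iteratedDeriv j (fun t : 𝕜 ↦ f (x + t • v)) 0 = 0) :
    iteratedFDeriv 𝕜 j f x = 0 :=
  eq_zero_of_comp_perm_of_eventually_diagonal_eq_zero (iteratedFDeriv_comp_perm hf) <|
    hline.mono fun v hv ↦ (iteratedDeriv_line_eq_iteratedFDeriv hf v).symm.trans hv

theorem stmt_5_general (hf : ContDiffAt 𝕜 ∞ f x)
    {U : Set E} (hU : IsOpen U) (hUne : U.Nonempty)
    (hvan : ∀ v ∈ U, ∀ j : ℕ, iteratedDeriv j (fun t : 𝕜 ↦ f (x + t • v)) 0 = 0) :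
    IsFlatAt 𝕜 f x where
  contDiffAt := hf
  iteratedFDeriv_eq_zero j := by
    obtain ⟨v₀, hv₀⟩ := hUne
    refine iteratedFDeriv_eq_zero_of_eventually_iteratedDeriv_line_eq_zero (v₀ := v₀)
      (hf.of_le (by exact_mod_cast le_top)) ?_
    filter_upwards [hU.mem_nhds hv₀] with v hv using hvan v hv j

end RCLike

/-- Let `f : ℝⁿ → ℝ` be smooth and let `U ⊆ ℝⁿ` be a nonempty open set.
If for every `v ∈ U` and every `j ∈ ℕ` the `j`-th derivative of `t ↦ f(t·v)` at `t = 0`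
vanishes, then `∂^α f(0) = 0` for every multi-index `α ∈ ℕⁿ`. -/
theorem stmt_5 {n : ℕ} (f : (Fin n → ℝ) → ℝ) (hf : ContDiff ℝ (⊤ : ℕ∞) f)
    (U : Set (Fin n → ℝ)) (hU : IsOpen U) (hUne : U.Nonempty)
    (hvan : ∀ v ∈ U, ∀ j : ℕ, iteratedDeriv j (fun t : ℝ => f (t • v)) 0 = 0) :
    ∀ α : Fin n → ℕ, mderiv α f 0 = 0 := by
  intro α
  have hflat : IsFlatAt ℝ f 0 :=
    stmt_5_general hf.contDiffAt hU hUne (by simpa only [zero_add] using hvan)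
  exact (hflat.mderiv α).apply_eq_zero
end
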